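/- Let A be an n×n complex matrix with Ind(A) = k and rank(A^k) = rank((A^k)~ A^k). Then A admits an m-core-EP decomposition: there exist matrices Â₁ and Â₂ with A = Â₁ + Â₂, rank(Â₁²) = rank(Â₁), rank(Â₁~ Â₁) = rank(Â₁), Â₂^k = 0, Â₁~ Â₂ = 0, and Â₂ Â₁ = 0. -/

import Mathlib

/-!
Write `B = A ^ k`. Since `B~ B` has the same rank as `B~`, its column space is that of `B~`, so
`B~ B Z = B~` for some `Z`, and `P = B Z` is an idempotent with `P~ = P` and `P B = B`: the
Minkowski-orthogonal projection onto the column space of `B`. The decomposition is `A₁ = P A`,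
`A₂ = (1 - P) A`. As the column space of `B` is `A`-invariant, `P A P = A P`, which gives
`A₂ A₁ = 0` and `A₂ ^ j = (1 - P) A ^ j` for `j ≥ 1`, hence `A₂ ^ k = 0`.
Since `rank A ^ (k + 1) = rank A ^ k`,
there is `U` with `A ^ (k + 1) U = A ^ k`, so `A₁ (B U) = B`; multiplying `A₁ ^ 2` and `A₁~ A₁` by
suitable matrices thus yields `B` and `B~ B`, both of rank `rank B ≥ rank A₁`.
-/

open Matrix

noncomputable section

/-- The Minkowski metric matrix `G = diag(1, -1, …, -1)`. -/
def mink (n : ℕ) : Matrix (Fin n) (Fin n) ℂ :=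
  Matrix.diagonal (fun i => if (i : ℕ) = 0 then 1 else -1)

/-- The Minkowski adjoint `A~ = G A* G`. -/
def madj {n : ℕ} (A : Matrix (Fin n) (Fin n) ℂ) : Matrix (Fin n) (Fin n) ℂ :=
  mink n * Aᴴ * mink n

/-- `k` is the index of `A`: the smallest positive integer with
`rank (A^(k+1)) = rank (A^k)`. -/
def IsInd {n : ℕ} (A : Matrix (Fin n) (Fin n) ℂ) (k : ℕ) : Prop :=
  0 < k ∧ (A ^ (k + 1)).rank = (A ^ k).rank ∧
    ∀ j, 0 < j → (A ^ (j + 1)).rank = (A ^ j).rank → k ≤ j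

/-- `X` is an m-core-EP inverse of `A` (with `Ind(A) = k`). -/
def IsMCoreEP {n : ℕ} (A X : Matrix (Fin n) (Fin n) ℂ) (k : ℕ) : Prop :=
  X * A * X = X ∧ X * A ^ (k + 1) = A ^ k ∧ madj (A * X) = A * X ∧
    ∃ Z : Matrix (Fin n) (Fin n) ℂ, X = A ^ k * Z

/-- `A = A₁ + A₂` is an m-core-EP decomposition of `A` (with `Ind(A) = k`). -/
def IsMCoreEPDecomp {n : ℕ} (A A₁ A₂ : Matrix (Fin n) (Fin n) ℂ) (k : ℕ) : Prop :=
  A = A₁ + A₂ ∧ (A₁ ^ 2).rank = A₁.rank ∧ (madj A₁ * A₁).rank = A₁.rank ∧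
    A₂ ^ k = 0 ∧ madj A₁ * A₂ = 0 ∧ A₂ * A₁ = 0

/-- If right multiplication by `N` does not lower the rank of `M`, then `M * N` and `M` have the
same column space, so `M` factors through `M * N`. -/
lemma exists_mul_eq_of_rank_le {n : ℕ} (M N : Matrix (Fin n) (Fin n) ℂ)
    (h : M.rank ≤ (M * N).rank) : ∃ U : Matrix (Fin n) (Fin n) ℂ, M * N * U = M := by
  have hle : LinearMap.range (M * N).mulVecLin ≤ LinearMap.range M.mulVecLin := by
    rw [Matrix.mulVecLin_mul]
    exact LinearMap.range_comp_le_range _ _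
  have heq := Submodule.eq_of_le_of_finrank_le hle h
  have hcol : ∀ j, ∃ u : Fin n → ℂ, (M * N) *ᵥ u = M.col j := by
    intro j
    have hj : M.mulVecLin (Pi.single j 1) ∈ LinearMap.range (M * N).mulVecLin := by
      rw [heq]
      exact LinearMap.mem_range_self _ _
    obtain ⟨u, hu⟩ := hj
    exact ⟨u, by simpa using hu⟩
  choose u hu using hcol
  refine ⟨Matrix.of fun i j => u j i, ?_⟩
  ext i j
  exact congrFun (hu j) i

lemma mink_mul_self (n : ℕ) : mink n * mink n = 1 := by
  rw [mink, Matrix.diagonal_mul_diagonal, ← Matrix.diagonal_one]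
  congr 1
  ext i
  split_ifs <;> simp

lemma mink_conjTranspose (n : ℕ) : (mink n)ᴴ = mink n := by
  rw [mink, Matrix.diagonal_conjTranspose]
  congr 1
  ext i
  simp only [Pi.star_apply]
  split_ifs <;> simp

lemma madj_mul {n : ℕ} (A B : Matrix (Fin n) (Fin n) ℂ) : madj (A * B) = madj B * madj A := by
  have h : madj B * madj A = mink n * Bᴴ * (mink n * mink n) * Aᴴ * mink n := by
    simp only [madj, Matrix.mul_assoc]
  rw [h, mink_mul_self, madj, Matrix.conjTranspose_mul]
  simp only [Matrix.mul_assoc, Matrix.one_mul]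

lemma madj_madj {n : ℕ} (A : Matrix (Fin n) (Fin n) ℂ) : madj (madj A) = A := by
  have h : madj (madj A) = (mink n * mink n) * A * (mink n * mink n) := by
    simp only [madj, Matrix.conjTranspose_mul, Matrix.conjTranspose_conjTranspose,
      mink_conjTranspose, Matrix.mul_assoc]
  rw [h, mink_mul_self, Matrix.one_mul, Matrix.mul_one]

open scoped ComplexOrder in
lemma rank_madj_le {n : ℕ} (A : Matrix (Fin n) (Fin n) ℂ) : (madj A).rank ≤ A.rank :=
  ((Matrix.rank_mul_le_left _ _).trans (Matrix.rank_mul_le_right _ _)).trans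
    (Matrix.rank_conjTranspose A).le

/-- When `rank B = rank (B~ B)`, there is a Minkowski-self-adjoint projection onto the column
space of `B`; its idempotence follows from `P = B * Z` and `P * B = B`. -/
lemma exists_madj_projection {n : ℕ} (B : Matrix (Fin n) (Fin n) ℂ)
    (h : B.rank = (madj B * B).rank) :
    ∃ P Z : Matrix (Fin n) (Fin n) ℂ, P = B * Z ∧ madj P = P ∧ P * B = B := by
  obtain ⟨Z, hZ⟩ := exists_mul_eq_of_rank_le (madj B) B ((rank_madj_le B).trans h.le)
  have hZ' : madj Z * (madj B * B) = B := by
    have := congrArg madj hZ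
    rwa [madj_mul, madj_mul, madj_madj] at this
  have hP : madj (B * Z) = B * Z := by
    calc madj (B * Z) = madj Z * madj B := madj_mul _ _
      _ = madj Z * (madj B * B * Z) := by rw [hZ]
      _ = madj Z * (madj B * B) * Z := by simp only [Matrix.mul_assoc]
      _ = B * Z := by rw [hZ']
  refine ⟨B * Z, Z, rfl, hP, ?_⟩
  rw [← hP, madj_mul, Matrix.mul_assoc, hZ']

/-- Existence of the m-core-EP decomposition. -/
theorem mCoreEPDecomp_exists {n k : ℕ} (A : Matrix (Fin n) (Fin n) ℂ)
    (hk : IsInd A k) (hrk : (A ^ k).rank = (madj (A ^ k) * A ^ k).rank) :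
    ∃ A₁ A₂ : Matrix (Fin n) (Fin n) ℂ, IsMCoreEPDecomp A A₁ A₂ k := by
  obtain ⟨hk0, hkr, -⟩ := hk
  obtain ⟨P, Z, hPZ, hPs, hPB⟩ := exists_madj_projection (A ^ k) hrk
  obtain ⟨U, hU⟩ := exists_mul_eq_of_rank_le (A ^ k) A (by rw [← pow_succ, hkr])
  set B := A ^ k with hB
  have hcomm : A * B = B * A := (Commute.self_pow A k).eq
  have hPP : P * P = P := by
    nth_rewrite 2 [hPZ]
    rw [← Matrix.mul_assoc, hPB, ← hPZ]
  have hPAP : P * A * P = A * P := by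
    calc P * A * P = P * (A * B) * Z := by rw [hPZ]; simp only [Matrix.mul_assoc]
      _ = P * B * A * Z := by rw [hcomm]; simp only [Matrix.mul_assoc]
      _ = A * B * Z := by rw [hPB, hcomm]
      _ = A * P := by rw [hPZ, Matrix.mul_assoc]
  have hQAP : (1 - P) * A * P = 0 := by
    rw [sub_mul, sub_mul, one_mul, hPAP, sub_self]
  have hQP : P * (1 - P) = 0 := by rw [mul_sub, mul_one, hPP, sub_self]
  have hA₁BU : P * A * (B * U) = B := by
    calc P * A * (B * U) = P * (A * B) * U := by simp only [Matrix.mul_assoc]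
      _ = P * B * A * U := by rw [hcomm]; simp only [Matrix.mul_assoc]
      _ = B := by rw [hPB, hU]
  have hrank : (P * A).rank ≤ B.rank := by
    rw [hPZ, Matrix.mul_assoc]
    exact Matrix.rank_mul_le_left _ _
  have hpow : ∀ j : ℕ, ((1 - P) * A) ^ (j + 1) = (1 - P) * A ^ (j + 1) := by
    intro j
    induction j with
    | zero => simp
    | succ j ih =>
      calc ((1 - P) * A) ^ (j + 1 + 1) = (1 - P) * A * ((1 - P) * A ^ (j + 1)) := by
            rw [pow_succ', ih]
        _ = (1 - P) * (A * A ^ (j + 1)) - (1 - P) * A * P * A ^ (j + 1) := by noncomm_ring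
        _ = (1 - P) * A ^ (j + 1 + 1) := by rw [hQAP, zero_mul, sub_zero, ← pow_succ']
  refine ⟨P * A, (1 - P) * A, ?_, ?_, ?_, ?_, ?_, ?_⟩
  · noncomm_ring
  · refine le_antisymm ?_ (hrank.trans ?_)
    · rw [sq]
      exact Matrix.rank_mul_le_left _ _
    · have h : (P * A) ^ 2 * (B * U * U) = B := by
        calc (P * A) ^ 2 * (B * U * U) = P * A * (P * A * (B * U) * U) := by
              rw [sq]; simp only [Matrix.mul_assoc]
          _ = B := by rw [hA₁BU, hA₁BU]
      calc B.rank = ((P * A) ^ 2 * (B * U * U)).rank := by rw [h]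
        _ ≤ _ := Matrix.rank_mul_le_left _ _
  · refine le_antisymm (Matrix.rank_mul_le_right _ _) (hrank.trans ?_)
    have h : madj (B * U) * (madj (P * A) * (P * A)) * (B * U) = madj B * B := by
      calc madj (B * U) * (madj (P * A) * (P * A)) * (B * U)
          = madj (P * A * (B * U)) * (P * A * (B * U)) := by
            rw [madj_mul (P * A)]; simp only [Matrix.mul_assoc]
        _ = madj B * B := by rw [hA₁BU]
    calc B.rank = (madj (B * U) * (madj (P * A) * (P * A)) * (B * U)).rank := by rw [h, hrk]
      _ ≤ _ := (Matrix.rank_mul_le_left _ _).trans (Matrix.rank_mul_le_right _ _)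
  · obtain ⟨j, rfl⟩ : ∃ j, k = j + 1 := ⟨k - 1, by omega⟩
    rw [hpow, ← hB, sub_mul, one_mul, hPB, sub_self]
  · calc madj (P * A) * ((1 - P) * A) = madj A * (P * (1 - P)) * A := by
          rw [madj_mul, hPs]; simp only [Matrix.mul_assoc]
      _ = 0 := by rw [hQP, mul_zero, zero_mul]
  · rw [← Matrix.mul_assoc, hQAP, zero_mul]
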